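/- For any UD exchange network instance, a UD solution exists if and only if a stable trade outcome exists, which holds if and only if the LP relaxation of maximum weight matching admits an integral optimum. -/

import Mathlib

namespace EN

open Finset

variable {V : Type*}

/-- The nonnegative part `(x)₊ = max (x, 0)`. -/
noncomputable def pos (x : ℝ) : ℝ := max x 0

variable [Fintype V] [DecidableEq V]

/-- The maximum of `f` over a finite set of vertices (`0` over the empty set). -/
noncomputable def fmax (s : Finset V) (f : V → ℝ) : ℝ := ⨆ k ∈ s, f k

/-- The offer from `i` to `j` given messages `α` and weights `w`:
`m_{i→j} = (w_{ij} − α_{i\j})₊ − (1/2) (w_{ij} − α_{i\j} − α_{j\i})₊`. -/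
noncomputable def offer (w α : V → V → ℝ) (i j : V) : ℝ :=
  pos (w i j - α i j) - (1 / 2) * pos (w i j - α i j - α j i)

/-- The update operator `T` of the natural dynamics:
`(Tα)_{i\j} = max_{k ∈ ∂i \ j} m_{k→i}`. -/
noncomputable def upd (G : SimpleGraph V) [DecidableRel G.Adj] (w α : V → V → ℝ)
    (i j : V) : ℝ :=
  fmax ((G.neighborFinset i).erase j) fun k => offer w α k i

/-- The earnings estimate `γ_i = max_{k ∈ ∂i} m_{k→i}`. -/
noncomputable def earn (G : SimpleGraph V) [DecidableRel G.Adj] (w α : V → V → ℝ)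
    (i : V) : ℝ :=
  fmax (G.neighborFinset i) fun k => offer w α k i

/-- Exchange network weights: symmetric and positive on every edge. -/
def GoodW (G : SimpleGraph V) (w : V → V → ℝ) : Prop :=
  (∀ i j, w i j = w j i) ∧ ∀ i j, G.Adj i j → 0 < w i j

/-- A valid message vector: nonnegative on all directed edges. -/
def ValidMsg (G : SimpleGraph V) (α : V → V → ℝ) : Prop :=
  ∀ i j, G.Adj i j → 0 ≤ α i j

/-- Fixed point of the natural-dynamics update operator. -/
def IsFixedPt (G : SimpleGraph V) [DecidableRel G.Adj] (w α : V → V → ℝ) : Prop :=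
  ∀ i j, G.Adj i j → upd G w α i j = α i j

/-- `ε`-fixed point. -/
def IsEpsFixedPt (G : SimpleGraph V) [DecidableRel G.Adj] (w α : V → V → ℝ) (ε : ℝ) : Prop :=
  ∀ i j, G.Adj i j → |α i j - upd G w α i j| ≤ ε

/-- The natural dynamics with damping factor `κ`: `α^{t+1} = (1−κ) α^t + κ T α^t`. -/
noncomputable def dyn (G : SimpleGraph V) [DecidableRel G.Adj] (w : V → V → ℝ) (κ : ℝ)
    (α0 : V → V → ℝ) : ℕ → V → V → ℝ
  | 0 => α0
  | t + 1 => fun i j =>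
      (1 - κ) * dyn G w κ α0 t i j + κ * upd G w (dyn G w κ α0 t) i j

/-- Sup norm over directed edges. -/
noncomputable def msgSup (G : SimpleGraph V) [DecidableRel G.Adj] (f : V → V → ℝ) : ℝ :=
  ⨆ p : V × V, if G.Adj p.1 p.2 then |f p.1 p.2| else 0

/-- `M` is a matching of `G`: a symmetric subrelation of adjacency pairing each node
with at most one partner. -/
structure IsMatching (G : SimpleGraph V) (M : V → V → Prop) : Prop where
  subset : ∀ i j, M i j → G.Adj i j
  symm : ∀ i j, M i j → M j i
  unique : ∀ i j k, M i j → M i k → j = k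

/-- `(M, γ)` is a trade outcome. -/
def IsOutcome (G : SimpleGraph V) (w : V → V → ℝ) (M : V → V → Prop) (γ : V → ℝ) : Prop :=
  IsMatching G M ∧ (∀ i, 0 ≤ γ i) ∧ (∀ i j, M i j → γ i + γ j = w i j) ∧
    ∀ i, (∀ j, ¬M i j) → γ i = 0

/-- Stability of an outcome. -/
def Stable (G : SimpleGraph V) (w : V → V → ℝ) (M : V → V → Prop) (γ : V → ℝ) : Prop :=
  ∀ i j, G.Adj i j → ¬M i j → w i j ≤ γ i + γ j

/-- The best alternative of `i` excluding `j`: `max_{k ∈ ∂i \ j} (w_{ik} − γ_k)₊`. -/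
noncomputable def bestAlt (G : SimpleGraph V) [DecidableRel G.Adj] (w : V → V → ℝ)
    (γ : V → ℝ) (i j : V) : ℝ :=
  fmax ((G.neighborFinset i).erase j) fun k => pos (w i k - γ k)

/-- Balance of an outcome. -/
def Balanced (G : SimpleGraph V) [DecidableRel G.Adj] (w : V → V → ℝ) (M : V → V → Prop)
    (γ : V → ℝ) : Prop :=
  ∀ i j, M i j → γ i - bestAlt G w γ i j = γ j - bestAlt G w γ j i

/-- Nash bargaining solution: a stable and balanced trade outcome. -/
def IsNBSolution (G : SimpleGraph V) [DecidableRel G.Adj] (w : V → V → ℝ)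
    (M : V → V → Prop) (γ : V → ℝ) : Prop :=
  IsOutcome G w M γ ∧ Stable G w M γ ∧ Balanced G w M γ

/-- `ε`-balance. -/
def EpsBalanced (G : SimpleGraph V) [DecidableRel G.Adj] (w : V → V → ℝ)
    (M : V → V → Prop) (γ : V → ℝ) (ε : ℝ) : Prop :=
  ∀ i j, M i j → |(γ i - bestAlt G w γ i j) - (γ j - bestAlt G w γ j i)| ≤ ε

/-- `ε`-Nash bargaining solution. -/
def IsEpsNB (G : SimpleGraph V) [DecidableRel G.Adj] (w : V → V → ℝ)
    (M : V → V → Prop) (γ : V → ℝ) (ε : ℝ) : Prop :=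
  IsOutcome G w M γ ∧ Stable G w M γ ∧ EpsBalanced G w M γ ε

/-- Feasible point of the LP relaxation of maximum weight matching. -/
def LPFeasible (G : SimpleGraph V) [DecidableRel G.Adj] (x : V → V → ℝ) : Prop :=
  (∀ i j, x i j = x j i) ∧ (∀ i j, 0 ≤ x i j) ∧ (∀ i j, ¬G.Adj i j → x i j = 0) ∧
    ∀ i, ∑ j ∈ G.neighborFinset i, x i j ≤ 1

/-- LP objective `Σ_{(i,j)∈E} w_{ij} x_{ij}` (each undirected edge counted once). -/
noncomputable def LPval (G : SimpleGraph V) [DecidableRel G.Adj] (w x : V → V → ℝ) : ℝ :=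
  (1 / 2) * ∑ i, ∑ j ∈ G.neighborFinset i, w i j * x i j

/-- Optimal point of the LP relaxation of maximum weight matching. -/
def LPOptimal (G : SimpleGraph V) [DecidableRel G.Adj] (w x : V → V → ℝ) : Prop :=
  LPFeasible G x ∧ ∀ y, LPFeasible G y → LPval G w y ≤ LPval G w x

def Integral (x : V → V → ℝ) : Prop := ∀ i j, x i j = 0 ∨ x i j = 1

def HalfIntegral (x : V → V → ℝ) : Prop := ∀ i j, x i j = 0 ∨ x i j = 1 / 2 ∨ x i j = 1

open Classical in
/-- The LP point associated to a matching. -/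
noncomputable def mInd (M : V → V → Prop) (i j : V) : ℝ := if M i j then 1 else 0

/-- The state with offers `m` induces the matching `M`: every node receiving a positive
offer is matched and receives its unique best offer from its partner, and every node
with zero earnings is unmatched. -/
def Induces (G : SimpleGraph V) [DecidableRel G.Adj] (m : V → V → ℝ)
    (M : V → V → Prop) : Prop :=
  IsMatching G M ∧
    (∀ i, (∃ k, G.Adj i k ∧ 0 < m k i) →
      ∃ j, M i j ∧ ∀ k, G.Adj i k → k ≠ j → m k i < m j i) ∧
    ∀ i, (fmax (G.neighborFinset i) fun k => m k i) = 0 → ∀ j, ¬M i j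

/-- Feasibility for the dual LP. -/
def DualFeasible (G : SimpleGraph V) (w : V → V → ℝ) (y : V → ℝ) : Prop :=
  (∀ i, 0 ≤ y i) ∧ ∀ i j, G.Adj i j → w i j ≤ y i + y j

/-- Optimality for the dual LP. -/
def DualOptimal (G : SimpleGraph V) (w : V → V → ℝ) (y : V → ℝ) : Prop :=
  DualFeasible G w y ∧ ∀ z, DualFeasible G w z → ∑ i, y i ≤ ∑ i, z i

/-- The unmatched balance property at every edge. -/
def UnmatchedBalance (G : SimpleGraph V) [DecidableRel G.Adj] (w : V → V → ℝ)
    (y : V → ℝ) : Prop :=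
  ∀ i j, G.Adj i j → y i - bestAlt G w y i j = y j - bestAlt G w y j i

/-! ### Unequal division -/

/-- Valid split fractions: `r_{ij} ∈ (0,1)` with `r_{ij} + r_{ji} = 1` on every edge. -/
def GoodR (G : SimpleGraph V) (r : V → V → ℝ) : Prop :=
  ∀ i j, G.Adj i j → 0 < r i j ∧ r i j < 1 ∧ r i j + r j i = 1

/-- The UD offer from `i` to `j`. -/
noncomputable def offerUD (w r α : V → V → ℝ) (i j : V) : ℝ :=
  pos (w i j - α i j) - r i j * pos (w i j - α i j - α j i)

/-- The UD update operator. -/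
noncomputable def updUD (G : SimpleGraph V) [DecidableRel G.Adj] (w r α : V → V → ℝ)
    (i j : V) : ℝ :=
  fmax ((G.neighborFinset i).erase j) fun k => offerUD w r α k i

/-- The UD earnings estimate. -/
noncomputable def earnUD (G : SimpleGraph V) [DecidableRel G.Adj] (w r α : V → V → ℝ)
    (i : V) : ℝ :=
  fmax (G.neighborFinset i) fun k => offerUD w r α k i

/-- Fixed point of the UD update operator. -/
def IsFixedPtUD (G : SimpleGraph V) [DecidableRel G.Adj] (w r α : V → V → ℝ) : Prop :=
  ∀ i j, G.Adj i j → updUD G w r α i j = α i j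

/-- Correct division. -/
def CorrectDiv (G : SimpleGraph V) [DecidableRel G.Adj] (w r : V → V → ℝ)
    (M : V → V → Prop) (γ : V → ℝ) : Prop :=
  ∀ i j, M i j →
    (1 / r i j) * (γ i - bestAlt G w γ i j) = (1 / r j i) * (γ j - bestAlt G w γ j i)

/-- UD solution: a stable trade outcome satisfying correct division. -/
def IsUDSolution (G : SimpleGraph V) [DecidableRel G.Adj] (w r : V → V → ℝ)
    (M : V → V → Prop) (γ : V → ℝ) : Prop :=
  IsOutcome G w M γ ∧ Stable G w M γ ∧ CorrectDiv G w r M γ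

/-- Edge surplus. -/
noncomputable def surp (G : SimpleGraph V) [DecidableRel G.Adj] (w : V → V → ℝ)
    (γ : V → ℝ) (i j : V) : ℝ :=
  w i j - bestAlt G w γ i j - bestAlt G w γ j i

open Classical in
/-- The rebalanced allocation `γ^reb`. -/
noncomputable def reb (G : SimpleGraph V) [DecidableRel G.Adj] (w r : V → V → ℝ)
    (M : V → V → Prop) (γ : V → ℝ) (i : V) : ℝ :=
  if h : ∃ j, M i j then
    bestAlt G w γ i h.choose + r i h.choose * surp G w γ i h.choose
  else 0

/-- The Edge Rebalancing iteration `γ^{t+1} = κ γ^reb(γ^t) + (1−κ) γ^t`. -/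
noncomputable def rebIter (G : SimpleGraph V) [DecidableRel G.Adj] (w r : V → V → ℝ)
    (M : V → V → Prop) (κ : ℝ) (γ0 : V → ℝ) : ℕ → V → ℝ
  | 0 => γ0
  | t + 1 => fun i =>
      κ * reb G w r M (rebIter G w r M κ γ0 t) i + (1 - κ) * rebIter G w r M κ γ0 t i

/-!
Stability makes an allocation `γ` feasible for the dual linear program, and complementary slackness
says exactly that `(M, γ)` is a stable outcome when `γ` and the indicator of `M` have equal value.
Hence a stable outcome certifies that its matching is an integral optimum. Conversely, Lagrange
multipliers for the degree constraints of the relaxation (the zero vector is a Slater point) are a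
dual solution of value equal to the optimum; paired with an integral optimum they form a stable
outcome.

With `M` fixed, the stable allocations form a compact convex set. Averaging an allocation with its
rebalancing maps this set into itself and is nonexpansive for the sup norm, since each rebalanced
earning is a convex combination of two 1-Lipschitz functions. A nonexpansive self-map of a compact
convex set has a fixed point, and a fixed point of the rebalancing satisfies correct division.
-/

section FixedPoint

variable {E : Type*} [NormedAddCommGroup E] [NormedSpace ℝ E] {K : Set E} {T : E → E}

theorem dist_lineMap_lineMap_le {a b c d : E} {D t : ℝ} (hac : dist a c ≤ D) (hbd : dist b d ≤ D)
    (ht : t ∈ Set.Icc (0 : ℝ) 1) :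
    dist (AffineMap.lineMap a b t) (AffineMap.lineMap c d t) ≤ D := by
  rw [dist_eq_norm, ← mem_closedBall_zero_iff] at hac hbd ⊢
  have hsub := AffineMap.lineMap_vsub_lineMap a b c d t
  rw [vsub_eq_sub, vsub_eq_sub, vsub_eq_sub] at hsub
  exact hsub ▸ (convex_closedBall 0 D).lineMap_mem hac hbd ht

-- The contraction `x ↦ (1 - t) T x + t p` has a fixed point, which `T` moves by at most `t diam K`.
theorem exists_dist_le_mul_diam_of_nonexpansive (hK : IsComplete K) (hbdd : Bornology.IsBounded K)
    (hconv : Convex ℝ K) (hne : K.Nonempty) (hmaps : Set.MapsTo T K K)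
    (hT : LipschitzOnWith 1 T K) {t : ℝ} (ht₀ : 0 < t) (ht₁ : t ≤ 1) :
    ∃ x ∈ K, dist (T x) x ≤ t * Metric.diam K := by
  obtain ⟨p, hp⟩ := hne
  let f : E → E := fun x => AffineMap.lineMap (T x) p t
  have hf : Set.MapsTo f K K := fun x hx => hconv.lineMap_mem (hmaps hx) hp ⟨ht₀.le, ht₁⟩
  have hlip : LipschitzOnWith ⟨1 - t, sub_nonneg.2 ht₁⟩ f K := by
    refine .of_dist_le_mul fun x hx y hy => ?_
    have hxy : dist (T x) (T y) ≤ dist x y := by simpa using hT.dist_le_mul x hx y hy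
    simp only [f, AffineMap.lineMap_apply_module, dist_add_right, dist_smul₀,
      Real.norm_of_nonneg (sub_nonneg.2 ht₁)]
    exact mul_le_mul_of_nonneg_left hxy (sub_nonneg.2 ht₁)
  have hcontr : ContractingWith ⟨1 - t, sub_nonneg.2 ht₁⟩ (hf.restrict f K K) :=
    ⟨NNReal.coe_lt_coe.1 (sub_lt_self 1 ht₀), hlip.mapsToRestrict hf⟩
  obtain ⟨x, hx, hfix, -⟩ := hcontr.exists_fixedPoint' hK hf hp (edist_ne_top _ _)
  refine ⟨x, hx, ?_⟩
  calc dist (T x) x = dist (T x) (f x) := by rw [hfix.eq]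
    _ = t * dist (T x) p := by rw [dist_left_lineMap, Real.norm_of_nonneg ht₀.le]
    _ ≤ t * Metric.diam K :=
      mul_le_mul_of_nonneg_left (Metric.dist_le_diam_of_mem hbdd (hmaps hx) hp) ht₀.le

theorem exists_isFixedPt_of_nonexpansive (hK : IsCompact K) (hconv : Convex ℝ K)
    (hne : K.Nonempty) (hmaps : Set.MapsTo T K K) (hT : LipschitzOnWith 1 T K) :
    ∃ x ∈ K, Function.IsFixedPt T x := by
  obtain ⟨x, hx, hmin⟩ := hK.exists_isMinOn hne 
    (continuous_dist.comp_continuousOn (hT.continuousOn.prodMk continuousOn_id))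
  have hle (n : ℕ) : dist (T x) x ≤ 1 / ((n : ℝ) + 1) * Metric.diam K := by
    obtain ⟨z, hz, hdist⟩ := exists_dist_le_mul_diam_of_nonexpansive hK.isComplete hK.isBounded
      hconv hne hmaps hT Nat.one_div_pos_of_nat (div_le_self zero_le_one (by simp))
    exact (hmin hz).trans hdist
  have hlim := (tendsto_one_div_add_atTop_nhds_zero_nat (𝕜 := ℝ)).mul_const (Metric.diam K)
  rw [zero_mul] at hlim
  exact ⟨x, hx, dist_le_zero.1 (ge_of_tendsto' hlim hle)⟩

end FixedPoint

theorem nonneg_of_forall_le_add_mul {𝕜 : Type*} [Field 𝕜] [LinearOrder 𝕜] [IsStrictOrderedRing 𝕜]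
    {a b c : 𝕜} (h : ∀ t, 0 ≤ t → a ≤ b + t * c) : 0 ≤ c := by
  by_contra! hc
  have hab : a ≤ b := by simpa using h 0 le_rfl
  have hle := h ((b - a + 1) / -c) (div_nonneg (by linarith) (by linarith))
  rw [div_neg, neg_mul, div_mul_cancel₀ _ hc.ne] at hle
  linarith

section Lagrange

variable {E ι : Type*} [AddCommGroup E] [Module ℝ E] {S : Set E} {f : E → ℝ} {g : E → ι → ℝ}

theorem convex_setOf_exists_le_and_le (hf : ConcaveOn ℝ S f) (hg : ConvexOn ℝ S g) :
    Convex ℝ {p : (ι → ℝ) × ℝ | ∃ x ∈ S, g x ≤ p.1 ∧ p.2 ≤ f x} := by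
  rintro p ⟨x, hx, hgx, hfx⟩ q ⟨z, hz, hgz, hfz⟩ a b ha hb hab
  refine ⟨a • x + b • z, hf.1 hx hz ha hb hab, (hg.2 hx hz ha hb hab).trans ?_,
    le_trans ?_ (hf.2 hx hz ha hb hab)⟩
  · exact add_le_add (smul_le_smul_of_nonneg_left hgx ha) (smul_le_smul_of_nonneg_left hgz hb)
  · exact add_le_add (smul_le_smul_of_nonneg_left hfx ha) (smul_le_smul_of_nonneg_left hfz hb)

variable [Fintype ι]

theorem exists_eq_dotProduct_add_mul (φ : Module.Dual ℝ ((ι → ℝ) × ℝ)) :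
    ∃ (y : ι → ℝ) (s : ℝ), ∀ u t, φ (u, t) = y ⬝ᵥ u + s * t := by
  classical
  obtain ⟨y, hy⟩ := (dotProductEquiv ℝ ι).surjective (φ ∘ₗ .inl ℝ (ι → ℝ) ℝ)
  refine ⟨y, φ (0, 1), fun u t => ?_⟩
  have hu : φ (u, 0) = y ⬝ᵥ u := (LinearMap.congr_fun hy u).symm
  have ht : φ (0, t) = φ (0, 1) * t := by
    simpa [mul_comm] using φ.map_smul t (0, 1)
  rw [← hu, ← ht, ← map_add, Prod.mk_add_mk, add_zero, zero_add]

theorem exists_separating_multipliers (hS : S.Nonempty) (hf : ConcaveOn ℝ S f)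
    (hg : ConvexOn ℝ S g) {P : ℝ} (hP : ∀ x ∈ S, g x ≤ 0 → f x ≤ P) :
    ∃ (y : ι → ℝ) (s c : ℝ), (y ≠ 0 ∨ s ≠ 0) ∧ (∀ u t, u ≤ 0 → P ≤ t → y ⬝ᵥ u + s * t ≤ c) ∧
      ∀ x ∈ S, c ≤ y ⬝ᵥ g x + s * f x := by
  let B : Set ((ι → ℝ) × ℝ) := Set.univ.pi (fun _ => Set.Iio 0) ×ˢ Set.Ioi P
  have hBopen : IsOpen B :=
    (isOpen_set_pi Set.finite_univ fun _ _ => isOpen_Iio).prod isOpen_Ioi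
  have hBconv : Convex ℝ B := (convex_pi fun _ _ => convex_Iio 0).prod (convex_Ioi P)
  have hdisj : Disjoint B {p : (ι → ℝ) × ℝ | ∃ x ∈ S, g x ≤ p.1 ∧ p.2 ≤ f x} := by
    refine Set.disjoint_left.2 ?_
    rintro ⟨u, t⟩ ⟨hu, ht⟩ ⟨x, hx, hgx, hfx⟩
    have hgx₀ : g x ≤ 0 := hgx.trans fun i => (hu i trivial).le
    exact (hfx.trans (hP x hx hgx₀)).not_gt ht
  obtain ⟨φ, c, hlt, hge⟩ :=
    geometric_hahn_banach_open hBconv hBopen (convex_setOf_exists_le_and_le hf hg) hdisj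
  obtain ⟨y, s, hφ⟩ := exists_eq_dotProduct_add_mul (φ : Module.Dual ℝ ((ι → ℝ) × ℝ))
  have hge' : ∀ x ∈ S, c ≤ y ⬝ᵥ g x + s * f x := fun x hx =>
    (hge (g x, f x) ⟨x, hx, le_rfl, le_rfl⟩).trans_eq (hφ _ _)
  refine ⟨y, s, c, ?_, fun u t hu ht => ?_, hge'⟩
  · by_contra! h
    obtain ⟨x, hx⟩ := hS
    have h₁ := (hφ (-1) (P + 1)).symm.trans_lt (hlt (-1, P + 1) (by simp [B]))
    have h₂ := hge' x hx
    simp only [h.1, h.2, zero_dotProduct, zero_mul] at h₁ h₂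
    linarith
  · have hmem : (u, t) ∈ closure B := by
      simpa [B, closure_prod_eq, closure_pi_set, Pi.le_def] using And.intro hu ht
    exact (hφ u t).symm.trans_le
      (closure_minimal (fun p hp => (hlt p hp).le) (isClosed_le φ.continuous continuous_const) hmem)

theorem exists_fritzJohn_multipliers (hS : S.Nonempty) (hf : ConcaveOn ℝ S f)
    (hg : ConvexOn ℝ S g) {P : ℝ} (hP : ∀ x ∈ S, g x ≤ 0 → f x ≤ P) :
    ∃ (y : ι → ℝ) (s : ℝ), 0 ≤ y ∧ 0 ≤ s ∧ (y ≠ 0 ∨ s ≠ 0) ∧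
      ∀ x ∈ S, s * f x ≤ s * P + y ⬝ᵥ g x := by
  classical
  obtain ⟨y, s, c, hne, hle, hge⟩ := exists_separating_multipliers hS hf hg hP
  refine ⟨y, -s, fun i => ?_, ?_, hne.imp_right neg_ne_zero.2, fun x hx => ?_⟩
  · refine nonneg_of_forall_le_add_mul (a := s * P) (b := c) fun t ht => ?_
    have := hle (Pi.single i (-t)) P (by simpa using ht) le_rfl
    rw [dotProduct_single] at this
    linarith
  · refine nonneg_of_forall_le_add_mul (a := s * P) (b := c) fun t ht => ?_
    have := hle 0 (P + t) le_rfl (le_add_of_nonneg_right ht)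
    rw [dotProduct_zero] at this
    linarith
  · have h₁ := hle 0 P le_rfl le_rfl
    have h₂ := hge x hx
    rw [dotProduct_zero] at h₁
    linarith

theorem exists_lagrange_multipliers (hf : ConcaveOn ℝ S f) (hg : ConvexOn ℝ S g) {P : ℝ}
    (hP : ∀ x ∈ S, g x ≤ 0 → f x ≤ P) {p : E} (hp : p ∈ S) (hslater : ∀ i, g p i < 0) :
    ∃ y : ι → ℝ, 0 ≤ y ∧ ∀ x ∈ S, f x ≤ P + y ⬝ᵥ g x := by
  obtain ⟨y, s, hy, hs, hne, hle⟩ := exists_fritzJohn_multipliers ⟨p, hp⟩ hf hg hP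
  -- If `s = 0`, evaluating at the Slater point `p` forces `y = 0`.
  have hs₀ : s ≠ 0 := by
    rintro rfl
    have hterm : ∀ i ∈ univ, y i * g p i ≤ 0 := fun i _ =>
      mul_nonpos_of_nonneg_of_nonpos (hy i) (hslater i).le
    have hsum : ∑ i, y i * g p i = 0 :=
      (sum_nonpos hterm).antisymm (by simpa [dotProduct] using hle p hp)
    refine hne.elim (fun hy₀ => hy₀ (funext fun i => ?_)) (fun h => h rfl)
    exact (mul_eq_zero.1 ((sum_eq_zero_iff_of_nonpos hterm).1 hsum i (mem_univ i))).resolve_right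
      (hslater i).ne
  refine ⟨s⁻¹ • y, smul_nonneg (inv_nonneg.2 hs) hy, fun x hx => ?_⟩
  calc f x = s⁻¹ * (s * f x) := (inv_mul_cancel_left₀ hs₀ _).symm
    _ ≤ s⁻¹ * (s * P + y ⬝ᵥ g x) := mul_le_mul_of_nonneg_left (hle x hx) (inv_nonneg.2 hs)
    _ = P + s⁻¹ • y ⬝ᵥ g x := by
      rw [mul_add, inv_mul_cancel_left₀ hs₀, smul_dotProduct, smul_eq_mul]

end Lagrange

section EdgeCone

variable {V : Type*} {G : SimpleGraph V} {M : V → V → Prop} {x : V → V → ℝ} {i j : V}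

/-- The symmetric nonnegative functions supported on the edges of `G`: the points of the linear
programming relaxation before the degree constraints are imposed. -/
def edgeCone (G : SimpleGraph V) : Set (V → V → ℝ) :=
  {x | (∀ i j, x i j = x j i) ∧ (∀ i j, 0 ≤ x i j) ∧ ∀ i j, ¬G.Adj i j → x i j = 0}

theorem convex_edgeCone : Convex ℝ (edgeCone G) := by
  rintro x ⟨hxs, hx₀, hxG⟩ z ⟨hzs, hz₀, hzG⟩ a b ha hb -
  refine ⟨fun i j => ?_, fun i j => ?_, fun i j hij => ?_⟩
  · simp only [Pi.add_apply, Pi.smul_apply, hxs i j, hzs i j]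
  · exact add_nonneg (mul_nonneg ha (hx₀ i j)) (mul_nonneg hb (hz₀ i j))
  · simp only [Pi.add_apply, Pi.smul_apply, hxG i j hij, hzG i j hij, smul_zero, add_zero]

theorem smul_mem_edgeCone (hx : x ∈ edgeCone G) {t : ℝ} (ht : 0 ≤ t) : t • x ∈ edgeCone G :=
  ⟨fun i j => congrArg (t • ·) (hx.1 i j), fun i j => mul_nonneg ht (hx.2.1 i j),
    fun i j hij => by simp only [Pi.smul_apply, hx.2.2 i j hij, smul_zero]⟩

theorem zero_mem_edgeCone : 0 ∈ edgeCone G :=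
  ⟨fun _ _ => rfl, fun _ _ => le_rfl, fun _ _ _ => rfl⟩

theorem mInd_of_rel (h : M i j) : mInd M i j = 1 :=
  if_pos h

theorem mInd_of_not (h : ¬M i j) : mInd M i j = 0 :=
  if_neg h

theorem sum_mul_mInd_eq_zero (h : ∀ j, ¬M i j) (s : Finset V) (f : V → ℝ) :
    ∑ k ∈ s, f k * mInd M i k = 0 :=
  sum_eq_zero fun k _ => by rw [mInd_of_not (h k), mul_zero]

theorem integral_mInd : Integral (mInd M) := fun i j => by
  unfold mInd
  split_ifs <;> simp

theorem Integral.mInd_eq (hx : Integral x) : mInd (fun i j => x i j = 1) = x := by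
  ext i j
  unfold mInd
  split_ifs with h
  · exact h.symm
  · exact ((hx i j).resolve_right h).symm

theorem IsMatching.mInd_mem_edgeCone (hM : IsMatching G M) : mInd M ∈ edgeCone G := by
  refine ⟨fun i j => ?_, fun i j => ?_, fun i j hij => mInd_of_not fun h => hij (hM.subset i j h)⟩
  · by_cases h : M i j
    · rw [mInd_of_rel h, mInd_of_rel (hM.symm i j h)]
    · rw [mInd_of_not h, mInd_of_not fun hji => h (hM.symm j i hji)]
  · unfold mInd
    positivity

theorem isMatching_edge (hij : G.Adj i j) : IsMatching G fun a b => s(a, b) = s(i, j) where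
  subset _ _ h := (G.adj_congr_of_sym2 h).2 hij
  symm _ _ h := Sym2.eq_swap.trans h
  unique _ _ _ hb hc := Sym2.congr_right.1 (hb.trans hc.symm)

end EdgeCone

section LinearProgram

variable {V : Type*} [Fintype V] {G : SimpleGraph V} [DecidableRel G.Adj] {w x : V → V → ℝ}
  {y : V → ℝ}

theorem LPval_add (w x z : V → V → ℝ) : LPval G w (x + z) = LPval G w x + LPval G w z := by
  simp only [LPval, Pi.add_apply, mul_add, sum_add_distrib]

theorem LPval_smul (w x : V → V → ℝ) (c : ℝ) : LPval G w (c • x) = c * LPval G w x := by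
  simp only [LPval, Pi.smul_apply, smul_eq_mul, mul_left_comm _ c, ← mul_sum]

theorem LPval_le_LPval {v : V → V → ℝ} (hvw : ∀ i j, G.Adj i j → v i j ≤ w i j)
    (hx : ∀ i j, 0 ≤ x i j) : LPval G v x ≤ LPval G w x :=
  mul_le_mul_of_nonneg_left
    (sum_le_sum fun i _ => sum_le_sum fun j hj =>
      mul_le_mul_of_nonneg_right (hvw i j ((G.mem_neighborFinset i j).1 hj)) (hx i j))
    (by norm_num)

theorem LPval_eq_LPval_iff_of_le {v : V → V → ℝ} (hvw : ∀ i j, G.Adj i j → v i j ≤ w i j)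
    (hx : ∀ i j, 0 ≤ x i j) :
    LPval G v x = LPval G w x ↔ ∀ i j, G.Adj i j → v i j * x i j = w i j * x i j := by
  have hle : ∀ i, ∀ j ∈ G.neighborFinset i, v i j * x i j ≤ w i j * x i j := fun i j hj =>
    mul_le_mul_of_nonneg_right (hvw i j ((G.mem_neighborFinset i j).1 hj)) (hx i j)
  rw [LPval, LPval, mul_right_inj' (by norm_num),
    sum_eq_sum_iff_of_le fun i _ => sum_le_sum (hle i)]
  simp only [mem_univ, true_imp_iff, sum_eq_sum_iff_of_le (hle _), G.mem_neighborFinset]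

theorem lpFeasible_iff :
    LPFeasible G x ↔ x ∈ edgeCone G ∧ ∀ i, ∑ j ∈ G.neighborFinset i, x i j ≤ 1 := by
  simp only [LPFeasible, edgeCone, Set.mem_ofPred_eq, and_assoc]

theorem LPval_vertex_add_vertex (hx : ∀ i j, x i j = x j i) (y : V → ℝ) :
    LPval G (fun i j => y i + y j) x = ∑ i, y i * ∑ j ∈ G.neighborFinset i, x i j := by
  have hswap : ∑ i, ∑ j ∈ G.neighborFinset i, y j * x i j =
      ∑ i, ∑ j ∈ G.neighborFinset i, y i * x i j := by
    rw [sum_comm' (t' := univ) (s' := fun j => G.neighborFinset j)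
      fun i j => by simp [G.adj_comm]]
    simp only [hx]
  simp only [LPval, add_mul, sum_add_distrib, hswap, mul_sum]
  ring

theorem LPval_vertex_add_vertex_le (hx : LPFeasible G x) (hy : ∀ i, 0 ≤ y i) :
    LPval G (fun i j => y i + y j) x ≤ ∑ i, y i := by
  rw [LPval_vertex_add_vertex hx.1]
  exact sum_le_sum fun i _ => mul_le_of_le_one_right (hy i) (hx.2.2.2 i)

theorem LPval_vertex_add_vertex_eq_iff (hx : LPFeasible G x) (hy : ∀ i, 0 ≤ y i) :
    LPval G (fun i j => y i + y j) x = ∑ i, y i ↔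
      ∀ i, y i * ∑ j ∈ G.neighborFinset i, x i j = y i := by
  rw [LPval_vertex_add_vertex hx.1,
    sum_eq_sum_iff_of_le fun i _ => mul_le_of_le_one_right (hy i) (hx.2.2.2 i)]
  simp only [mem_univ, true_imp_iff]

theorem LPval_le_sum_of_dualFeasible (hx : LPFeasible G x) (hy : DualFeasible G w y) :
    LPval G w x ≤ ∑ i, y i :=
  (LPval_le_LPval hy.2 hx.2.1).trans (LPval_vertex_add_vertex_le hx hy.1)

theorem complementary_slackness (hx : LPFeasible G x) (hy : DualFeasible G w y) :
    LPval G w x = ∑ i, y i ↔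
      (∀ i j, G.Adj i j → w i j * x i j = (y i + y j) * x i j) ∧
        ∀ i, y i * ∑ j ∈ G.neighborFinset i, x i j = y i := by
  rw [← LPval_eq_LPval_iff_of_le hy.2 hx.2.1, ← LPval_vertex_add_vertex_eq_iff hx hy.1]
  have h₁ := LPval_le_LPval hy.2 hx.2.1
  have h₂ := LPval_vertex_add_vertex_le hx hy.1
  exact ⟨fun h => ⟨h₁.antisymm (h ▸ h₂), h₂.antisymm (h ▸ h₁)⟩, fun h => h.1.trans h.2⟩

end LinearProgram

section Matching

variable {V : Type*} [Fintype V] {G : SimpleGraph V} [DecidableRel G.Adj] {w : V → V → ℝ}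
  {M : V → V → Prop}

namespace IsMatching

theorem sum_mul_mInd_of_rel (hM : IsMatching G M) {i j : V} (h : M i j) (f : V → ℝ) :
    ∑ k ∈ G.neighborFinset i, f k * mInd M i k = f j := by
  rw [sum_eq_single_of_mem j ((G.mem_neighborFinset i j).2 (hM.subset i j h)) fun k _ hkj => ?_]
  · rw [mInd_of_rel h, mul_one]
  · rw [mInd_of_not fun hik => hkj (hM.unique i k j hik h), mul_zero]

theorem sum_mInd_of_rel (hM : IsMatching G M) {i j : V} (h : M i j) :
    ∑ k ∈ G.neighborFinset i, mInd M i k = 1 := by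
  simpa only [one_mul] using hM.sum_mul_mInd_of_rel h fun _ => 1

theorem lpFeasible_mInd (hM : IsMatching G M) : LPFeasible G (mInd M) := by
  refine lpFeasible_iff.2 ⟨hM.mInd_mem_edgeCone, fun i => ?_⟩
  by_cases h : ∃ j, M i j
  · exact (hM.sum_mInd_of_rel h.choose_spec).le
  · have := sum_mul_mInd_eq_zero (not_exists.1 h) (G.neighborFinset i) fun _ => 1
    simp only [one_mul] at this
    exact this.trans_le zero_le_one

end IsMatching

theorem LPFeasible.isMatching {x : V → V → ℝ} (hx : LPFeasible G x) :
    IsMatching G fun i j => x i j = 1 := by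
  have hadj : ∀ i j, x i j = 1 → G.Adj i j := fun i j h => by
    by_contra hij
    exact zero_ne_one ((hx.2.2.1 i j hij).symm.trans h)
  refine ⟨hadj, fun i j h => (hx.1 j i).trans h, fun i j k hj hk => ?_⟩
  by_contra hjk
  have hle := (add_le_sum (fun l _ => hx.2.1 i l) ((G.mem_neighborFinset i j).2 (hadj i j hj))
    ((G.mem_neighborFinset i k).2 (hadj i k hk)) hjk).trans (hx.2.2.2 i)
  norm_num [hj, hk] at hle

theorem LPval_mInd_edge (hw : ∀ i j, w i j = w j i) {i j : V} (hij : G.Adj i j) :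
    LPval G w (mInd fun a b => s(a, b) = s(i, j)) = w i j := by
  have hM := isMatching_edge hij
  rw [LPval, sum_eq_add i j hij.ne (fun a _ ha => sum_mul_mInd_eq_zero (fun b h => ?_) _ _)
    (fun h => absurd (mem_univ i) h) fun h => absurd (mem_univ j) h,
    hM.sum_mul_mInd_of_rel rfl, hM.sum_mul_mInd_of_rel Sym2.eq_swap, hw j i]
  · ring
  · rcases Sym2.eq_iff.1 h with h | h
    exacts [ha.1 h.1, ha.2 h.1]

end Matching

section StrongDuality

variable {V : Type*} [Fintype V] {G : SimpleGraph V} [DecidableRel G.Adj] {w : V → V → ℝ}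

theorem exists_nonneg_forall_LPval_le {P : ℝ} (hP : ∀ x, LPFeasible G x → LPval G w x ≤ P) :
    ∃ y : V → ℝ, (∀ i, 0 ≤ y i) ∧
      ∀ x ∈ edgeCone G, LPval G w x ≤ P + (LPval G (fun i j => y i + y j) x - ∑ i, y i) := by
  let excess : (V → V → ℝ) → V → ℝ := fun x i => ∑ j ∈ G.neighborFinset i, x i j - 1
  have hf : ConcaveOn ℝ (edgeCone G) (LPval G w) := by
    refine ⟨convex_edgeCone, fun x _ z _ a b _ _ _ => ?_⟩
    rw [LPval_add, LPval_smul, LPval_smul, smul_eq_mul, smul_eq_mul]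
  have hg : ConvexOn ℝ (edgeCone G) excess := by
    refine ⟨convex_edgeCone, fun x _ z _ a b _ _ hab i => le_of_eq ?_⟩
    simp only [excess, Pi.add_apply, Pi.smul_apply, smul_eq_mul, sum_add_distrib, ← mul_sum]
    linear_combination hab
  obtain ⟨y, hy, hle⟩ := exists_lagrange_multipliers hf hg
    (fun x hx hexc => hP x (lpFeasible_iff.2 ⟨hx, fun i => sub_nonpos.1 (hexc i)⟩))
    zero_mem_edgeCone fun i => by simp [excess]
  refine ⟨y, hy, fun x hx => (hle x hx).trans_eq ?_⟩
  rw [LPval_vertex_add_vertex hx.1]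
  simp only [dotProduct, excess, mul_sub, mul_one, sum_sub_distrib]

theorem exists_dualFeasible_sum_le (hw : ∀ i j, w i j = w j i) {P : ℝ}
    (hP : ∀ x, LPFeasible G x → LPval G w x ≤ P) :
    ∃ y : V → ℝ, DualFeasible G w y ∧ ∑ i, y i ≤ P := by
  obtain ⟨y, hy, hle⟩ := exists_nonneg_forall_LPval_le hP
  refine ⟨y, ⟨hy, fun i j hij => ?_⟩, ?_⟩
  -- The multiplier inequality along the ray `t • e`, with `e` the indicator of the edge `ij`.
  · refine sub_nonneg.1 (nonneg_of_forall_le_add_mul (a := ∑ k, y k) (b := P) fun t ht => ?_)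
    have := hle _ (smul_mem_edgeCone (isMatching_edge hij).mInd_mem_edgeCone ht)
    rw [LPval_smul, LPval_smul, LPval_mInd_edge hw hij,
      LPval_mInd_edge (fun a b => add_comm (y a) (y b)) hij] at this
    linarith
  · simpa [LPval] using hle 0 zero_mem_edgeCone

end StrongDuality

section StableOutcome

variable {V : Type*} {G : SimpleGraph V} {w : V → V → ℝ} {M : V → V → Prop} {γ : V → ℝ}

theorem IsOutcome.dualFeasible (hout : IsOutcome G w M γ) (hstable : Stable G w M γ) :
    DualFeasible G w γ := by
  refine ⟨hout.2.1, fun i j hij => ?_⟩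
  by_cases h : M i j
  exacts [(hout.2.2.1 i j h).ge, hstable i j hij h]

variable [Fintype V] [DecidableRel G.Adj]

theorem isOutcome_and_stable_iff :
    IsOutcome G w M γ ∧ Stable G w M γ ↔
      IsMatching G M ∧ DualFeasible G w γ ∧ LPval G w (mInd M) = ∑ i, γ i := by
  constructor
  · rintro ⟨hout, hstable⟩
    have hdual := hout.dualFeasible hstable
    obtain ⟨hM, -, hmatched, hfree⟩ := hout
    refine ⟨hM, hdual, (complementary_slackness hM.lpFeasible_mInd hdual).2
      ⟨fun i j _ => ?_, fun i => ?_⟩⟩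
    · by_cases h : M i j
      · rw [hmatched i j h]
      · rw [mInd_of_not h, mul_zero, mul_zero]
    · by_cases h : ∃ j, M i j
      · rw [hM.sum_mInd_of_rel h.choose_spec, mul_one]
      · rw [hfree i (not_exists.1 h), zero_mul]
  · rintro ⟨hM, hdual, hval⟩
    obtain ⟨hedge, hvertex⟩ := (complementary_slackness hM.lpFeasible_mInd hdual).1 hval
    refine ⟨⟨hM, hdual.1, fun i j h => ?_, fun i h => ?_⟩, fun i j hij _ => hdual.2 i j hij⟩
    · simpa [mInd_of_rel h] using (hedge i j (hM.subset i j h)).symm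
    · rw [← hvertex i, mul_sum]
      exact sum_mul_mInd_eq_zero h _ _

theorem lpOptimal_mInd_of_stable (hout : IsOutcome G w M γ) (hstable : Stable G w M γ) :
    LPOptimal G w (mInd M) := by
  obtain ⟨hM, hdual, hval⟩ := isOutcome_and_stable_iff.1 ⟨hout, hstable⟩
  exact ⟨hM.lpFeasible_mInd, fun x hx => (LPval_le_sum_of_dualFeasible hx hdual).trans_eq hval.symm⟩

theorem exists_stable_of_lpOptimal (hw : ∀ i j, w i j = w j i) {x : V → V → ℝ}
    (hx : LPOptimal G w x) (hint : Integral x) :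
    ∃ (M : V → V → Prop) (γ : V → ℝ), IsOutcome G w M γ ∧ Stable G w M γ := by
  obtain ⟨γ, hdual, hle⟩ := exists_dualFeasible_sum_le hw hx.2
  refine ⟨_, γ, isOutcome_and_stable_iff.2 ⟨hx.1.isMatching, hdual, ?_⟩⟩
  rw [hint.mInd_eq]
  exact (LPval_le_sum_of_dualFeasible hx.1 hdual).antisymm hle

end StableOutcome

section StableAllocations

variable {V : Type*} {G : SimpleGraph V} {w : V → V → ℝ} {M : V → V → Prop}

theorem convex_setOf_dualFeasible : Convex ℝ {y | DualFeasible G w y} := by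
  rintro y ⟨hy₀, hyG⟩ z ⟨hz₀, hzG⟩ a b ha hb hab
  refine ⟨fun i => add_nonneg (mul_nonneg ha (hy₀ i)) (mul_nonneg hb (hz₀ i)), fun i j hij => ?_⟩
  calc w i j = a * w i j + b * w i j := by rw [← add_mul, hab, one_mul]
    _ ≤ a * (y i + y j) + b * (z i + z j) :=
      add_le_add (mul_le_mul_of_nonneg_left (hyG i j hij) ha)
        (mul_le_mul_of_nonneg_left (hzG i j hij) hb)
    _ = (a • y + b • z) i + (a • y + b • z) j := by
      simp only [Pi.add_apply, Pi.smul_apply, smul_eq_mul]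
      ring

theorem isClosed_setOf_dualFeasible : IsClosed {y | DualFeasible G w y} := by
  simp only [DualFeasible, Set.ofPred_and, Set.ofPred_forall]
  exact (isClosed_iInter fun i => isClosed_le continuous_const (continuous_apply i)).inter
    (isClosed_iInter fun i => isClosed_iInter fun j => isClosed_iInter fun _ =>
      isClosed_le continuous_const ((continuous_apply i).add (continuous_apply j)))

/-- The allocations that form a stable trade outcome with the fixed matching `M`: the domain on
which allocations are rebalanced. -/
def stableAllocations (G : SimpleGraph V) (w : V → V → ℝ) (M : V → V → Prop) : Set (V → ℝ) :=
  {γ | IsOutcome G w M γ ∧ Stable G w M γ}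

theorem stableAllocations_eq (hM : IsMatching G M) :
    stableAllocations G w M = {γ | DualFeasible G w γ} ∩
      ({γ | ∀ i j, M i j → γ i + γ j = w i j} ∩ {γ | ∀ i, (∀ j, ¬M i j) → γ i = 0}) := by
  ext γ
  exact ⟨fun h => ⟨h.1.dualFeasible h.2, h.1.2.2⟩,
    fun h => ⟨⟨hM, h.1.1, h.2⟩, fun i j hij _ => h.1.2 i j hij⟩⟩

theorem convex_stableAllocations (hM : IsMatching G M) : Convex ℝ (stableAllocations G w M) := by
  rw [stableAllocations_eq hM]
  refine convex_setOf_dualFeasible.inter (.inter ?_ ?_)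
  · intro γ hγ δ hδ a b _ _ hab i j h
    simp only [Pi.add_apply, Pi.smul_apply, smul_eq_mul]
    linear_combination a * hγ i j h + b * hδ i j h + w i j * hab
  · intro γ hγ δ hδ a b _ _ _ i h
    simp only [Pi.add_apply, Pi.smul_apply, hγ i h, hδ i h, smul_zero, add_zero]

theorem isClosed_stableAllocations (hM : IsMatching G M) : IsClosed (stableAllocations G w M) := by
  rw [stableAllocations_eq hM]
  simp only [Set.ofPred_forall]
  exact isClosed_setOf_dualFeasible.inter
    ((isClosed_iInter fun i => isClosed_iInter fun j => isClosed_iInter fun _ =>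
      isClosed_eq ((continuous_apply i).add (continuous_apply j)) continuous_const).inter
    (isClosed_iInter fun i => isClosed_iInter fun _ =>
      isClosed_eq (continuous_apply i) continuous_const))

theorem isCompact_stableAllocations (hM : IsMatching G M) :
    IsCompact (stableAllocations G w M) := by
  classical
  let bound : V → ℝ := fun i => if h : ∃ j, M i j then w i h.choose else 0
  refine (isCompact_Icc (a := 0) (b := bound)).of_isClosed_subset
    (isClosed_stableAllocations hM) fun γ hγ => ⟨hγ.1.2.1, fun i => ?_⟩
  by_cases h : ∃ j, M i j
  · simp only [bound, dif_pos h, ← hγ.1.2.2.1 i _ h.choose_spec]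
    exact le_add_of_nonneg_right (hγ.1.2.1 _)
  · simpa only [bound, dif_neg h] using (hγ.1.2.2.2 i (not_exists.1 h)).le

end StableAllocations

section BestAlternative

variable {V : Type*}

theorem le_fmax {s : Finset V} (f : V → ℝ) {k : V} (hk : k ∈ s) : f k ≤ fmax s f := by
  have hbdd : BddAbove (Set.range fun l => ⨆ _ : l ∈ s, f l) := by
    refine (((s.finite_toSet.image f).insert 0).subset ?_).bddAbove
    rintro _ ⟨l, rfl⟩
    by_cases hl : l ∈ s
    · exact .inr ⟨l, hl, by simp [hl]⟩
    · exact .inl (by simp [hl])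
  exact (by simp [hk] : f k = ⨆ _ : k ∈ s, f k).trans_le (le_ciSup hbdd k)

theorem fmax_le {s : Finset V} {f : V → ℝ} {c : ℝ} (hc : 0 ≤ c) (h : ∀ k ∈ s, f k ≤ c) :
    fmax s f ≤ c :=
  Real.iSup_le (fun k => Real.iSup_le (h k) hc) hc

theorem fmax_nonneg {s : Finset V} {f : V → ℝ} (hf : ∀ k ∈ s, 0 ≤ f k) : 0 ≤ fmax s f :=
  Real.iSup_nonneg fun k => Real.iSup_nonneg (hf k)

variable [Fintype V] [DecidableEq V] {G : SimpleGraph V} [DecidableRel G.Adj] {w : V → V → ℝ}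
  {γ : V → ℝ} {i j k : V}

theorem bestAlt_nonneg : 0 ≤ bestAlt G w γ i j :=
  fmax_nonneg fun _ _ => le_max_right _ _

theorem sub_le_bestAlt (hik : G.Adj i k) (hkj : k ≠ j) : w i k - γ k ≤ bestAlt G w γ i j :=
  (le_max_left _ _).trans (le_fmax (fun l => pos (w i l - γ l))
    (mem_erase.2 ⟨hkj, (G.mem_neighborFinset i k).2 hik⟩))

theorem bestAlt_le {c : ℝ} (hc : 0 ≤ c) (h : ∀ k, G.Adj i k → k ≠ j → w i k ≤ c + γ k) :
    bestAlt G w γ i j ≤ c :=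
  fmax_le hc fun k hk => max_le (sub_le_iff_le_add.2
    (h k ((G.mem_neighborFinset i k).1 (mem_of_mem_erase hk)) (ne_of_mem_erase hk))) hc

theorem DualFeasible.bestAlt_le (hγ : DualFeasible G w γ) (i j : V) : bestAlt G w γ i j ≤ γ i :=
  EN.bestAlt_le (hγ.1 i) fun k hik _ => hγ.2 i k hik

theorem lipschitzWith_bestAlt (i j : V) : LipschitzWith 1 fun γ => bestAlt G w γ i j := by
  refine .of_le_add fun γ δ => bestAlt_le (add_nonneg bestAlt_nonneg dist_nonneg)
    fun k hik hkj => ?_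
  have hle : w i k - δ k ≤ bestAlt G w δ i j := sub_le_bestAlt hik hkj
  have hdist : δ k - γ k ≤ dist γ δ :=
    (le_abs_self _).trans ((Real.dist_eq _ _).symm.trans_le
      ((dist_le_pi_dist δ γ k).trans_eq (dist_comm δ γ)))
  linarith

end BestAlternative

section Rebalancing

variable {V : Type*} [Fintype V] [DecidableEq V] {G : SimpleGraph V} [DecidableRel G.Adj]
  {w r : V → V → ℝ} {M : V → V → Prop} {γ : V → ℝ} {i j k : V}

theorem surp_comm (hw : ∀ i j, w i j = w j i) : surp G w γ i j = surp G w γ j i := by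
  rw [surp, surp, hw i j, sub_right_comm]

theorem reb_of_rel (hM : IsMatching G M) (h : M i j) :
    reb G w r M γ i = bestAlt G w γ i j + r i j * surp G w γ i j := by
  have hex : ∃ k, M i k := ⟨j, h⟩
  rw [reb, dif_pos hex, hM.unique i _ j hex.choose_spec h]

theorem reb_of_forall_not (h : ∀ j, ¬M i j) : reb G w r M γ i = 0 :=
  dif_neg (not_exists.2 h)

theorem reb_add_reb (hw : ∀ i j, w i j = w j i) (hr : GoodR G r) (hM : IsMatching G M)
    (h : M i j) : reb G w r M γ i + reb G w r M γ j = w i j := by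
  rw [reb_of_rel hM h, reb_of_rel hM (hM.symm i j h), surp_comm hw (i := j)]
  have hsum := (hr i j (hM.subset i j h)).2.2
  rw [surp]
  linear_combination (w i j - bestAlt G w γ i j - bestAlt G w γ j i) * hsum

theorem lipschitzWith_reb (hr : GoodR G r) (hM : IsMatching G M) :
    LipschitzWith 1 (reb G w r M) := by
  refine .of_dist_le_mul fun γ δ => ?_
  rw [NNReal.coe_one, one_mul]
  refine (dist_pi_le_iff dist_nonneg).2 fun i => ?_
  by_cases h : ∃ j, M i j
  · obtain ⟨j, h⟩ := h
    obtain ⟨hr₀, hr₁, -⟩ := hr i j (hM.subset i j h)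
    have hconv (ε : V → ℝ) : reb G w r M ε i =
        AffineMap.lineMap (bestAlt G w ε i j) (w i j - bestAlt G w ε j i) (r i j) := by
      rw [reb_of_rel hM h, surp, AffineMap.lineMap_apply_ring']
      ring
    have hi := (lipschitzWith_bestAlt (G := G) (w := w) i j).dist_le_mul γ δ
    have hj := (lipschitzWith_bestAlt (G := G) (w := w) j i).dist_le_mul γ δ
    rw [NNReal.coe_one, one_mul] at hi hj
    rw [hconv, hconv]
    exact dist_lineMap_lineMap_le hi ((dist_sub_left _ _ _).trans_le hj) ⟨hr₀.le, hr₁.le⟩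
  · rw [reb_of_forall_not (not_exists.1 h), reb_of_forall_not (not_exists.1 h), dist_self]
    exact dist_nonneg

theorem surp_nonneg (hγ : γ ∈ stableAllocations G w M) (h : M i j) :
    0 ≤ surp G w γ i j := by
  have hdual := hγ.1.dualFeasible hγ.2
  have hsum := hγ.1.2.2.1 i j h
  rw [surp]
  linarith [hdual.bestAlt_le i j, hdual.bestAlt_le j i]

theorem bestAlt_le_reb (hr : GoodR G r) (hγ : γ ∈ stableAllocations G w M) (h : M i j) :
    bestAlt G w γ i j ≤ reb G w r M γ i := by
  rw [reb_of_rel hγ.1.1 h]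
  exact le_add_of_nonneg_right (mul_nonneg (hr i j (hγ.1.1.subset i j h)).1.le
    (surp_nonneg hγ h))

theorem reb_nonneg (hr : GoodR G r) (hγ : γ ∈ stableAllocations G w M) (i : V) :
    0 ≤ reb G w r M γ i := by
  by_cases h : ∃ j, M i j
  · exact bestAlt_nonneg.trans (bestAlt_le_reb hr hγ h.choose_spec)
  · exact (reb_of_forall_not (not_exists.1 h)).ge

theorem sub_le_reb (hr : GoodR G r) (hγ : γ ∈ stableAllocations G w M) (hik : G.Adj i k)
    (hM : ¬M i k) : w i k - γ k ≤ reb G w r M γ i := by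
  by_cases h : ∃ j, M i j
  · obtain ⟨j, h⟩ := h
    exact (sub_le_bestAlt hik fun hkj => hM (hkj ▸ h)).trans (bestAlt_le_reb hr hγ h)
  · have hfree := hγ.1.2.2.2 i (not_exists.1 h)
    rw [reb_of_forall_not (not_exists.1 h)]
    linarith [hγ.2 i k hik hM]

-- Without averaging stability may fail: `sub_le_reb` bounds `reb i` only in terms of the old `γ k`.
theorem midpoint_reb_mem_stableAllocations (hw : ∀ i j, w i j = w j i) (hr : GoodR G r)
    (hγ : γ ∈ stableAllocations G w M) :
    midpoint ℝ γ (reb G w r M γ) ∈ stableAllocations G w M := by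
  have happ (i : V) : midpoint ℝ γ (reb G w r M γ) i = (γ i + reb G w r M γ i) / 2 := by
    simp [midpoint_eq_smul_add, div_eq_inv_mul]
  refine ⟨⟨hγ.1.1, fun i => ?_, fun i j h => ?_, fun i h => ?_⟩, fun i k hik h => ?_⟩
  · rw [happ]
    linarith [hγ.1.2.1 i, reb_nonneg hr hγ i]
  · rw [happ, happ]
    linarith [hγ.1.2.2.1 i j h, reb_add_reb (γ := γ) hw hr hγ.1.1 h]
  · rw [happ, hγ.1.2.2.2 i h, reb_of_forall_not h, add_zero, zero_div]
  · rw [happ, happ]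
    have hi := sub_le_reb hr hγ hik h
    have hk := sub_le_reb hr hγ hik.symm fun hki => h (hγ.1.1.symm k i hki)
    rw [hw k i] at hk
    linarith

theorem correctDiv_of_reb_eq (hw : ∀ i j, w i j = w j i) (hr : GoodR G r) (hM : IsMatching G M)
    (h : reb G w r M γ = γ) : CorrectDiv G w r M γ := by
  have hgain : ∀ i j, M i j → 1 / r i j * (γ i - bestAlt G w γ i j) = surp G w γ i j := by
    intro i j hij
    have hγ : γ i = bestAlt G w γ i j + r i j * surp G w γ i j :=
      (congrFun h i).symm.trans (reb_of_rel hM hij)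
    rw [hγ, add_sub_cancel_left, one_div, inv_mul_cancel_left₀ (hr i j (hM.subset i j hij)).1.ne']
  intro i j hij
  rw [hgain i j hij, hgain j i (hM.symm i j hij), surp_comm hw]

theorem exists_isUDSolution_of_stable (hw : ∀ i j, w i j = w j i) (hr : GoodR G r)
    (hout : IsOutcome G w M γ) (hstable : Stable G w M γ) : ∃ δ, IsUDSolution G w r M δ := by
  have hlip : LipschitzOnWith 1 (fun γ => midpoint ℝ γ (reb G w r M γ))
      (stableAllocations G w M) := by
    refine .of_dist_le_mul fun γ _ δ _ => (dist_midpoint_midpoint_le γ _ δ _).trans ?_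
    have := (lipschitzWith_reb (w := w) hr hout.1).dist_le_mul γ δ
    rw [NNReal.coe_one, one_mul] at this ⊢
    linarith
  obtain ⟨δ, hδ, hfix⟩ := exists_isFixedPt_of_nonexpansive (isCompact_stableAllocations hout.1)
    (convex_stableAllocations hout.1) ⟨γ, hout, hstable⟩
    (fun _ => midpoint_reb_mem_stableAllocations hw hr) hlip
  exact ⟨δ, hδ.1, hδ.2, correctDiv_of_reb_eq hw hr hout.1 ((midpoint_eq_left_iff ..).1 hfix).symm⟩

end Rebalancing

/-- A UD solution exists iff a stable trade outcome exists, iff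
the LP relaxation of maximum weight matching admits an integral optimum. -/
theorem UD_solution_existence_iff
    {V : Type*} [Fintype V] [DecidableEq V] (G : SimpleGraph V) [DecidableRel G.Adj]
    (w : V → V → ℝ) (hw : GoodW G w) (r : V → V → ℝ) (hr : GoodR G r) :
    ((∃ (M : V → V → Prop) (γ : V → ℝ), IsUDSolution G w r M γ) ↔
      (∃ (M : V → V → Prop) (γ : V → ℝ), IsOutcome G w M γ ∧ Stable G w M γ)) ∧
    ((∃ (M : V → V → Prop) (γ : V → ℝ), IsOutcome G w M γ ∧ Stable G w M γ) ↔
      ∃ x : V → V → ℝ, LPOptimal G w x ∧ Integral x) := by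
  refine ⟨⟨?_, ?_⟩, ?_, ?_⟩
  · rintro ⟨M, γ, hout, hstable, -⟩
    exact ⟨M, γ, hout, hstable⟩
  · rintro ⟨M, γ, hout, hstable⟩
    exact ⟨M, exists_isUDSolution_of_stable hw.1 hr hout hstable⟩
  · rintro ⟨M, γ, hout, hstable⟩
    exact ⟨mInd M, lpOptimal_mInd_of_stable hout hstable, integral_mInd⟩
  · rintro ⟨x, hx, hint⟩
    exact exists_stable_of_lpOptimal hw.1 hx hint

end EN
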